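/- Let ν ∈ ℝ. For every t ∈ ℝ, lim_{s→0, s≠0} K^B_{22,free}(γ(t), γ(t+s)) = (3−ν)κ(t)/(8π), where for x ≠ y, with r = x − y, n_x = n(t), τ_x = τ(t): K^B_{22,free}(x,y) = G^B_{n_x n_x n_x}(x,y) + (2−ν) G^B_{n_x τ_x τ_x}(x,y) + (1−ν)κ(t)·[ G^B_{τ_x τ_x}(x,y) − G^B_{n_x n_x}(x,y) ], with G^B_{n_x n_x n_x}(x,y) = (3/(4π))(r·n_x)/‖r‖² − (1/(2π))(r·n_x)³/‖r‖⁴, G^B_{n_x τ_x τ_x}(x,y) = −(1/(2π))(r·n_x)(r·τ_x)²/‖r‖⁴ + (1/(4π))(r·n_x)/‖r‖², and G^B_{τ_x τ_x}(x,y) − G^B_{n_x n_x}(x,y) = 1/(4π) − (1/(2π))(r·n_x)²/‖r‖². -/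

import Mathlib

open Real Filter Topology MeasureTheory

noncomputable section

/-- Euclidean dot product on `ℝ × ℝ`. -/
def dot2 (v w : ℝ × ℝ) : ℝ := v.1 * w.1 + v.2 * w.2

/-- Unit tangent vector `τ(s) = γ′(s)`. -/
def tang (γ : ℝ → ℝ × ℝ) (s : ℝ) : ℝ × ℝ := deriv γ s

/-- Unit normal vector `n(s) = (τ₂(s), −τ₁(s))`. -/
def nor (γ : ℝ → ℝ × ℝ) (s : ℝ) : ℝ × ℝ := ((deriv γ s).2, -(deriv γ s).1)

/-- Signed curvature `κ(s) = −γ″(s)·n(s)`. -/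
def curv (γ : ℝ → ℝ × ℝ) (s : ℝ) : ℝ := -(dot2 (deriv (deriv γ) s) (nor γ s))

/-- The free-plate kernel
`K^B_{22,free}(x,y) = G^B_{n_x n_x n_x} + (2−ν) G^B_{n_x τ_x τ_x}
  + (1−ν)κ(t)(G^B_{τ_x τ_x} − G^B_{n_x n_x})`, given by explicit formulas,
with `r = x − y`, `n_x = n(t)`, `τ_x = τ(t)`. -/
def K22free (γ : ℝ → ℝ × ℝ) (ν : ℝ) (t : ℝ) (x y : ℝ × ℝ) : ℝ :=
  (3 / (4 * π) * dot2 (x - y) (nor γ t) / dot2 (x - y) (x - y)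
      - 1 / (2 * π) * (dot2 (x - y) (nor γ t)) ^ 3 / (dot2 (x - y) (x - y)) ^ 2)
    + (2 - ν) *
      (-(1 / (2 * π)) * dot2 (x - y) (nor γ t) * (dot2 (x - y) (tang γ t)) ^ 2
          / (dot2 (x - y) (x - y)) ^ 2
        + 1 / (4 * π) * dot2 (x - y) (nor γ t) / dot2 (x - y) (x - y))
    + (1 - ν) * curv γ t *
      (1 / (4 * π) - 1 / (2 * π) * (dot2 (x - y) (nor γ t)) ^ 2 / dot2 (x - y) (x - y))

theorem stmt10 (L : ℝ) (hL : 0 < L) (γ : ℝ → ℝ × ℝ)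
    (hγ : ContDiff ℝ (⊤ : ℕ∞) γ)
    (hper : ∀ s, γ (s + L) = γ s)
    (hinj : Set.InjOn γ (Set.Ico 0 L))
    (harc : ∀ s, dot2 (deriv γ s) (deriv γ s) = 1)
    (ν : ℝ) (t : ℝ) :
    Tendsto (fun s : ℝ => K22free γ ν t (γ t) (γ (t + s))) (𝓝[≠] (0 : ℝ))
      (𝓝 ((3 - ν) * curv γ t / (8 * π))) := by
  have hd1 : Differentiable ℝ γ := hγ.differentiable (by simp)
  have hd2 : Differentiable ℝ (deriv γ) := by
    exact (contDiff_infty_iff_deriv.1 hγ).2.differentiable (by simp)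
  have hx1 : ∀ s, HasDerivAt (fun s => (γ (t + s)).1) (deriv γ (t + s)).1 s := fun s =>
    ((hd1 (t + s)).hasDerivAt.comp_const_add t s).fst
  have hy1 : ∀ s, HasDerivAt (fun s => (γ (t + s)).2) (deriv γ (t + s)).2 s := fun s =>
    ((hd1 (t + s)).hasDerivAt.comp_const_add t s).snd
  have hx2 : ∀ s, HasDerivAt (fun s => (deriv γ (t + s)).1) (deriv (deriv γ) (t + s)).1 s :=
    fun s => ((hd2 (t + s)).hasDerivAt.comp_const_add t s).fst
  have hy2 : ∀ s, HasDerivAt (fun s => (deriv γ (t + s)).2) (deriv (deriv γ) (t + s)).2 s :=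
    fun s => ((hd2 (t + s)).hasDerivAt.comp_const_add t s).snd
  have hu := harc t
  have hκ : curv γ t = -((deriv (deriv γ) t).1 * (deriv γ t).2
      - (deriv (deriv γ) t).2 * (deriv γ t).1) := by
    simp only [curv, dot2, nor]; ring
  have sx := (hx1 0).tendsto_slope_zero
  have sy := (hy1 0).tendsto_slope_zero
  have sx2 := (hx2 0).tendsto_slope_zero
  have sy2 := (hy2 0).tendsto_slope_zero
  simp only [zero_add, add_zero, smul_eq_mul] at sx sy sx2 sy2
  have hs : Tendsto (fun s : ℝ => s) (𝓝[≠] (0:ℝ)) (𝓝 0) := tendsto_nhdsWithin_of_tendsto_nhds tendsto_id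
  have hne : ∀ᶠ s : ℝ in 𝓝[≠] (0:ℝ), s ≠ 0 := eventually_mem_nhdsWithin
  -- scaled normal component
  have ha : Tendsto (fun s => dot2 (γ t - γ (t + s)) (nor γ t) / s ^ 2) (𝓝[≠] (0:ℝ))
      (𝓝 (curv γ t / 2)) := by
    have hf : ∀ s, HasDerivAt (fun s => dot2 (γ t - γ (t + s)) (nor γ t))
        (-(deriv γ (t + s)).1 * (deriv γ t).2 + (deriv γ (t + s)).2 * (deriv γ t).1) s := by
      intro s
      have := (((hx1 s).const_sub (γ t).1).mul_const (deriv γ t).2).add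
        (((hy1 s).const_sub (γ t).2).mul_const (-(deriv γ t).1))
      refine (this.congr_deriv (by ring)).congr_of_eventuallyEq (Eventually.of_forall fun s => ?_)
      simp [dot2, nor]
    have hg : ∀ s : ℝ, HasDerivAt (fun s : ℝ => s ^ 2) (2 * s) s := by
      intro s; simpa using hasDerivAt_pow 2 s
    refine HasDerivAt.lhopital_zero_nhdsNE (Eventually.of_forall hf) (Eventually.of_forall hg)
      (hne.mono fun s h => by simpa using h) ?_ ?_ ?_
    · have := (hf 0).continuousAt.tendsto
      simp only [add_zero, sub_self] at this
      simp only [dot2, Prod.fst_zero, Prod.snd_zero, zero_mul, add_zero] at this ⊢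
      exact tendsto_nhdsWithin_of_tendsto_nhds this
    · simpa using hs.pow 2
    · have := ((sy2.mul_const (deriv γ t).1).sub (sx2.mul_const (deriv γ t).2)).div_const 2
      rw [hκ]
      refine (this.congr' ?_).trans (le_of_eq (by congr 1; ring))
      filter_upwards [hne] with s h
      field_simp
      ring
  have hq : Tendsto (fun s => dot2 (γ t - γ (t + s)) (γ t - γ (t + s)) / s ^ 2) (𝓝[≠] (0:ℝ))
      (𝓝 1) := by
    have := (sx.pow 2).add (sy.pow 2)
    refine (this.congr' ?_).trans (le_of_eq (by congr 1; rw [← hu, dot2]; ring))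
    filter_upwards [hne] with s h
    simp only [dot2, Prod.fst_sub, Prod.snd_sub]
    field_simp
    ring
  have hp : Tendsto (fun s => dot2 (γ t - γ (t + s)) (tang γ t) / s) (𝓝[≠] (0:ℝ))
      (𝓝 (-1)) := by
    have := ((sx.mul_const (deriv γ t).1).add (sy.mul_const (deriv γ t).2)).neg
    refine (this.congr' ?_).trans (le_of_eq (by congr 1; rw [← hu, dot2]))
    filter_upwards [hne] with s h
    simp only [dot2, tang, Prod.fst_sub, Prod.snd_sub]
    field_simp
    ring
  have hq0 := hq.eventually_ne one_ne_zero
  have haq := ha.div hq one_ne_zero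
  have hiq := hq.inv₀ one_ne_zero
  have key := (((haq.const_mul (3 / (4 * π))).sub
      ((((hs.pow 2).mul (ha.pow 3)).mul (hiq.pow 2)).const_mul (1 / (2 * π)))).add
      ((((((ha.mul (hp.pow 2)).mul (hiq.pow 2)).const_mul (-(1 / (2 * π)))).add
        (haq.const_mul (1 / (4 * π))))).const_mul (2 - ν))).add
      (((((hs.pow 2).mul (ha.pow 2)).mul hiq).const_mul (1 / (2 * π))).const_sub
        (1 / (4 * π)) |>.const_mul ((1 - ν) * curv γ t))
  refine (key.congr' ?_).trans (le_of_eq ?_)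
  · filter_upwards [hne, hq0] with s h h0
    have hD : dot2 (γ t - γ (t + s)) (γ t - γ (t + s)) ≠ 0 := fun h' => h0 (by simp [h'])
    simp only [K22free, Pi.div_apply]
    generalize dot2 (γ t - γ (t + s)) (γ t - γ (t + s)) = D at *
    generalize dot2 (γ t - γ (t + s)) (nor γ t) = A
    generalize dot2 (γ t - γ (t + s)) (tang γ t) = B
    have hpi := Real.pi_ne_zero
    field_simp
  · congr 1
    have hpi := Real.pi_ne_zero
    field_simp
    ring
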